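/- arXiv:2502.20055 — 4 statements merged into one kernel-verified Lean document; each statement's English description precedes it below -/
import Mathlib

section
/- Let ρ_θ = Σ_{k=1}^N λ_k(θ)P_k(θ) where λ_k : ℝ → (0,1) are differentiable with λ_j(θ) ≠ λ_k(θ) for j ≠ k, and P₁, …, P_N : ℝ → M_n(ℂ) are differentiable families of Hermitian matrices with P_j(θ)P_k(θ) = δ_{jk}P_j(θ) and Σ_k P_k(θ) = I. Define H(θ) = Σ_k (λ_k'(θ)/λ_k(θ))P_k(θ) + Σ_k (ln λ_k(θ))P_k'(θ) and, for t ∈ [0,1], ρ_θ^t = Σ_k λ_k(θ)^t P_k(θ). Then ∫₀¹ ρ_θ^t H(θ) ρ_θ^{1−t} dt = ρ_θ' for every θ, where ρ_θ' = Σ_k λ_k'(θ)P_k(θ) + Σ_k λ_k(θ)P_k'(θ). -/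
open Matrix

/-!
On the block `P a * X * P b`, the map `X ↦ ∫ ρ ^ t * X * ρ ^ (1 - t)` is multiplication by the
logarithmic mean `L (λ a) (λ b)` of the two eigenvalues. Differentiating `P a * P k = δ_{ak} P a`
shows that the `(a, b)` block of `∑ k, f (λ k) • P' k` is
`(f (λ a) - f (λ b)) • (P a * P' a * P b)`. Since `L x y * (log x - log y) = x - y`, the map turns
the block for `f = log` into the block for `f = id`; since `L x x = x`, it turns
`(λ' a / λ a) • P a` into `λ' a • P a`.
-/

section LogMean

/-- The logarithmic mean of two positive reals in integral form; unlike the quotient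
`(a - b) / (log a - log b)`, it takes the right value on the diagonal. -/
noncomputable def logMean (a b : ℝ) : ℝ :=
  ∫ t in (0 : ℝ)..1, a ^ t * b ^ (1 - t)

variable {a b : ℝ}

lemma hasDerivAt_rpow_mul_rpow_one_sub (ha : 0 < a) (hb : 0 < b) (t : ℝ) :
    HasDerivAt (fun t : ℝ => a ^ t * b ^ (1 - t))
      (a ^ t * b ^ (1 - t) * (Real.log a - Real.log b)) t := by
  have ha' := (hasDerivAt_id t).const_rpow ha
  have hb' := ((hasDerivAt_id t).const_sub 1).const_rpow hb
  refine (ha'.mul hb').congr_deriv ?_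
  simp only [id]
  ring

lemma continuous_rpow_mul_rpow_one_sub (ha : 0 < a) (hb : 0 < b) :
    Continuous fun t : ℝ => a ^ t * b ^ (1 - t) :=
  continuous_iff_continuousAt.2 fun t => (hasDerivAt_rpow_mul_rpow_one_sub ha hb t).continuousAt

lemma logMean_mul_log_sub_log (ha : 0 < a) (hb : 0 < b) :
    logMean a b * (Real.log a - Real.log b) = a - b := by
  rw [logMean, ← intervalIntegral.integral_mul_const,
    intervalIntegral.integral_eq_sub_of_hasDerivAt
      (fun t _ => hasDerivAt_rpow_mul_rpow_one_sub ha hb t)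
      (((continuous_rpow_mul_rpow_one_sub ha hb).mul_const _).intervalIntegrable _ _)]
  simp

lemma logMean_self (ha : 0 < a) : logMean a a = a := by
  simp [logMean, ← Real.rpow_add ha]

end LogMean

section OrthogonalIdempotents

variable {R A ι : Type*} [CommRing R] [Ring A] [Algebra R A] [Fintype ι] {P Q : ι → A}

lemma mul_sum_smul_of_orthogonalIdempotents (hP : OrthogonalIdempotents P) (c : ι → R) (a : ι) :
    P a * ∑ k, c k • P k = c a • P a := by
  classical
  simp [Finset.mul_sum, hP.mul_eq]

lemma sum_smul_mul_of_orthogonalIdempotents (hP : OrthogonalIdempotents P) (c : ι → R) (b : ι) :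
    (∑ k, c k • P k) * P b = c b • P b := by
  classical
  simp [Finset.sum_mul, hP.mul_eq]

lemma sum_smul_mul_mul_sum_smul (u v : ι → R) (X : A) :
    (∑ a, u a • P a) * X * (∑ b, v b • P b) = ∑ a, ∑ b, (u a * v b) • (P a * X * P b) := by
  simp only [Finset.sum_mul, Finset.mul_sum, smul_mul_assoc, mul_smul_comm, Finset.smul_sum,
    smul_smul]
  rw [Finset.sum_comm]
  simp only [mul_comm (v _)]

lemma sum_sum_mul_mul_of_completeOrthogonalIdempotents (hP : CompleteOrthogonalIdempotents P)
    (X : A) : ∑ a, ∑ b, P a * X * P b = X := by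
  simp [← Finset.mul_sum, ← Finset.sum_mul, hP.complete]

/-- `Q` is a first-order variation of the orthogonal idempotents `P`: the equations
`P j * P k = δ_{jk} P j` persist to first order along `P + ε Q`. -/
def IsOrthogonalVariation [DecidableEq ι] (P Q : ι → A) : Prop :=
  ∀ j k, Q j * P k + P j * Q k = if j = k then Q j else 0

namespace IsOrthogonalVariation

variable [DecidableEq ι]

lemma mul_sum_smul (hQ : IsOrthogonalVariation P Q) (f : ι → R) (a : ι) :
    P a * ∑ k, f k • Q k = f a • Q a - Q a * ∑ k, f k • P k := by
  have mul_eq (k : ι) : P a * Q k = (if a = k then Q a else 0) - Q a * P k :=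
    eq_sub_of_add_eq' (hQ a k)
  simp [Finset.mul_sum, mul_eq, smul_sub]

lemma mul_sum_smul_mul (hQ : IsOrthogonalVariation P Q) (hP : OrthogonalIdempotents P)
    (f : ι → R) (a b : ι) :
    P a * (∑ k, f k • Q k) * P b = (f a - f b) • (P a * Q a * P b) :=
  calc
    P a * (∑ k, f k • Q k) * P b = P a * (P a * ∑ k, f k • Q k) * P b := by
      rw [← mul_assoc, (hP.idem a).eq]
    _ = f a • (P a * Q a * P b) - P a * Q a * ((∑ k, f k • P k) * P b) := by
      rw [hQ.mul_sum_smul]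
      simp only [mul_sub, sub_mul, mul_smul_comm, smul_mul_assoc, mul_assoc]
    _ = (f a - f b) • (P a * Q a * P b) := by
      rw [sum_smul_mul_of_orthogonalIdempotents hP, mul_smul_comm, sub_smul]

lemma mul_sum_add_sum_mul (hQ : IsOrthogonalVariation P Q) (hP : OrthogonalIdempotents P)
    (f g : ι → R) (a b : ι) :
    P a * (∑ k, g k • P k + ∑ k, f k • Q k) * P b =
      (if a = b then g a • P a else 0) + (f a - f b) • (P a * Q a * P b) := by
  rw [mul_add, add_mul, hQ.mul_sum_smul_mul hP, mul_sum_smul_of_orthogonalIdempotents hP,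
    smul_mul_assoc, hP.mul_eq, smul_ite, smul_zero]

lemma logMean_smul_mul_mul [Algebra ℝ A] (hQ : IsOrthogonalVariation P Q)
    (hP : OrthogonalIdempotents P) {lam : ι → ℝ} (hlam : ∀ k, 0 < lam k) (lam' : ι → ℝ)
    (a b : ι) :
    logMean (lam a) (lam b) •
        (P a * (∑ k, (lam' k / lam k) • P k + ∑ k, Real.log (lam k) • Q k) * P b) =
      P a * (∑ k, lam' k • P k + ∑ k, lam k • Q k) * P b := by
  rw [hQ.mul_sum_add_sum_mul hP, hQ.mul_sum_add_sum_mul hP, smul_add, smul_smul,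
    logMean_mul_log_sub_log (hlam a) (hlam b)]
  congr 1
  split_ifs with hab
  · rw [← hab, logMean_self (hlam a), smul_smul, mul_div_cancel₀ _ (hlam a).ne']
  · exact smul_zero _

end IsOrthogonalVariation

lemma integral_map_rpow_mul_mul_rpow [Algebra ℝ A] {E : Type*} [NormedAddCommGroup E]
    [NormedSpace ℝ E] [CompleteSpace E] (φ : A →ₗ[ℝ] E) {lam : ι → ℝ} (hlam : ∀ k, 0 < lam k)
    (X : A) :
    ∫ t in (0 : ℝ)..1, φ ((∑ k, lam k ^ t • P k) * X * ∑ k, lam k ^ (1 - t) • P k) =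
      φ (∑ a, ∑ b, logMean (lam a) (lam b) • (P a * X * P b)) := by
  have hcont (a b : ι) :
      Continuous fun t : ℝ => (lam a ^ t * lam b ^ (1 - t)) • φ (P a * X * P b) :=
    (continuous_rpow_mul_rpow_one_sub (hlam a) (hlam b)).smul continuous_const
  simp only [sum_smul_mul_mul_sum_smul, map_sum, map_smul]
  rw [intervalIntegral.integral_finsetSum fun a _ =>
    (continuous_finsetSum _ fun b _ => hcont a b).intervalIntegrable _ _]
  refine Finset.sum_congr rfl fun a _ => ?_
  rw [intervalIntegral.integral_finsetSum fun b _ => (hcont a b).intervalIntegrable _ _]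
  exact Finset.sum_congr rfl fun b _ => intervalIntegral.integral_smul_const _ _

end OrthogonalIdempotents

section MatrixFamilies

open Topology

variable {ι m 𝔸 : Type*} [Fintype m] [DecidableEq m] [NormedRing 𝔸]
  [NormedAlgebra ℝ 𝔸] {P : ι → ℝ → Matrix m m 𝔸} {P' : ι → Matrix m m 𝔸} {θ : ℝ}

lemma isOrthogonalVariation_of_hasDerivAt [DecidableEq ι]
    (hP : ∀ᶠ s in 𝓝 θ, OrthogonalIdempotents fun k => P k s)
    (hP' : ∀ k i j, HasDerivAt (fun s => P k s i j) (P' k i j) θ) :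
    IsOrthogonalVariation (fun k => P k θ) P' := by
  intro a b
  ext i j
  have deriv_mul : HasDerivAt (fun s => (P a s * P b s) i j)
      ((P' a * P b θ + P a θ * P' b) i j) θ := by
    simp only [Matrix.mul_apply, Matrix.add_apply, ← Finset.sum_add_distrib]
    exact HasDerivAt.fun_sum fun k _ => (hP' a i k).mul (hP' b k j)
  have deriv_ite : HasDerivAt (fun s => (if a = b then P a s else 0) i j)
      ((if a = b then P' a else 0) i j) θ := by
    split_ifs
    · exact hP' a i j
    · exact hasDerivAt_const θ 0
  refine deriv_mul.unique (deriv_ite.congr_of_eventuallyEq ?_)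
  filter_upwards [hP] with s hs
  rw [hs.mul_eq]

theorem kmb_relation_general [Fintype ι] [CompleteSpace 𝔸] {lam : ι → ℝ → ℝ} {lam' : ι → ℝ}
    (hlam : ∀ k, 0 < lam k θ) (_hlam' : ∀ k, HasDerivAt (lam k) (lam' k) θ)
    (hP : ∀ᶠ s in 𝓝 θ, CompleteOrthogonalIdempotents fun k => P k s)
    (hP' : ∀ k i j, HasDerivAt (fun s => P k s i j) (P' k i j) θ) (i j : m) :
    ∫ t in (0 : ℝ)..1, ((∑ k, lam k θ ^ t • P k θ) *
        (∑ k, (lam' k / lam k θ) • P k θ + ∑ k, Real.log (lam k θ) • P' k) *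
          ∑ k, lam k θ ^ (1 - t) • P k θ) i j =
      (∑ k, lam' k • P k θ + ∑ k, lam k θ • P' k) i j := by
  classical
  have hQ : IsOrthogonalVariation (fun k => P k θ) P' :=
    isOrthogonalVariation_of_hasDerivAt (hP.mono fun _ hs => hs.toOrthogonalIdempotents) hP'
  have hPθ : CompleteOrthogonalIdempotents fun k => P k θ := hP.self_of_nhds
  refine (integral_map_rpow_mul_mul_rpow (entryLinearMap ℝ 𝔸 i j) hlam _).trans ?_
  simp only [hQ.logMean_smul_mul_mul hPθ.toOrthogonalIdempotents hlam]
  rw [sum_sum_mul_mul_of_completeOrthogonalIdempotents hPθ, entryLinearMap_apply]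

end MatrixFamilies

/-- Kubo–Mori–Bogoliubov relation: for `ρ_θ = Σ_k λ_k(θ)P_k(θ)` (spectral decomposition with
distinct eigenvalues `λ_k(θ) ∈ (0,1)` and differentiable mutually orthogonal Hermitian
projections summing to `I`), the Boltzmann–von Neumann logarithmic derivative
`H(θ) = Σ_k (λ_k'/λ_k)P_k + Σ_k (ln λ_k)P_k'` satisfies
`∫₀¹ ρ_θ^t H(θ) ρ_θ^{1−t} dt = ρ_θ'` (entrywise), where
`ρ_θ^t = Σ_k λ_k(θ)^t P_k(θ)` and `ρ_θ' = Σ_k λ_k'(θ)P_k(θ) + Σ_k λ_k(θ)P_k'(θ)`. -/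
theorem kmb_relation {n N : ℕ}
    (lam lam' : Fin N → ℝ → ℝ)
    (P P' : Fin N → ℝ → Matrix (Fin n) (Fin n) ℂ)
    (hlam : ∀ k θ, lam k θ ∈ Set.Ioo (0 : ℝ) 1)
    (hlamdist : ∀ j k θ, j ≠ k → lam j θ ≠ lam k θ)
    (hlamderiv : ∀ k θ, HasDerivAt (lam k) (lam' k θ) θ)
    (hPderiv : ∀ k i₁ i₂ θ, HasDerivAt (fun t => P k t i₁ i₂) (P' k θ i₁ i₂) θ)
    (hherm : ∀ k θ, (P k θ).IsHermitian)
    (horth : ∀ j k θ, P j θ * P k θ = if j = k then P j θ else 0)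
    (hsum : ∀ θ, ∑ k, P k θ = 1)
    (H ρ' : ℝ → Matrix (Fin n) (Fin n) ℂ)
    (hH : ∀ θ, H θ = ∑ k, ((lam' k θ / lam k θ : ℝ) : ℂ) • P k θ +
        ∑ k, ((Real.log (lam k θ) : ℝ) : ℂ) • P' k θ)
    (hρ' : ∀ θ, ρ' θ = ∑ k, ((lam' k θ : ℝ) : ℂ) • P k θ +
        ∑ k, ((lam k θ : ℝ) : ℂ) • P' k θ) :
    ∀ (θ : ℝ) (i j : Fin n),
      (∫ t in (0 : ℝ)..1,
        ((∑ k, ((lam k θ ^ t : ℝ) : ℂ) • P k θ) * H θ *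
          (∑ k, ((lam k θ ^ (1 - t) : ℝ) : ℂ) • P k θ)) i j) = ρ' θ i j := by
  intro θ i j
  simpa only [hH, hρ', Complex.coe_smul] using kmb_relation_general (fun k => (hlam k θ).1)
    (hlamderiv · θ) (.of_forall fun s => ⟨OrthogonalIdempotents.iff_mul_eq.2 (horth · · s), hsum s⟩)
    (hPderiv · · · θ) i j
end

section
/- Let ρ_θ = Σ_{k=1}^N λ_k(θ)P_k(θ) where λ_k : ℝ → (0,1) are differentiable with λ_j(θ) ≠ λ_k(θ) for j ≠ k, and P₁, …, P_N : ℝ → M_n(ℂ) are differentiable families of Hermitian matrices with P_j(θ)P_k(θ) = δ_{jk}P_j(θ) and Σ_k P_k(θ) = I. Then the improper integral ∫₀^∞ (ρ_θ + uI)^{−1} ρ_θ' (ρ_θ + uI)^{−1} du converges and equals Σ_k (λ_k'(θ)/λ_k(θ))P_k(θ) + Σ_k (ln λ_k(θ))P_k'(θ), where ρ_θ' = Σ_k λ_k'(θ)P_k(θ) + Σ_k λ_k(θ)P_k'(θ). -/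
open Matrix MeasureTheory

/-!
The resolvent `(ρ + u)⁻¹` can be differentiated in `θ` in two ways: as an inverse, which gives
`-(ρ + u)⁻¹ ρ' (ρ + u)⁻¹`, and through its spectral decomposition `∑ k, (λ_k + u)⁻¹ P_k`. Hence
`(ρ + u)⁻¹ ρ' (ρ + u)⁻¹ = ∑ k, (λ_k + u)⁻² λ_k' P_k - ∑ k, (λ_k + u)⁻¹ P_k'`.
The functions `(λ_k + u)⁻¹` are not integrable on `(0, ∞)`, but `∑ k, P_k' = 0` allows each of them
to be replaced by `(λ_k + u)⁻¹ - (1 + u)⁻¹`, whose integral is `-log λ_k`.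
-/

open Filter Topology
open scoped Ring

section Algebra

variable {ι R A : Type*} [Fintype ι] {P : ι → A}

lemma sum_smul_mul_sum_smul [CommSemiring R] [Semiring A] [Algebra R A]
    (hP : OrthogonalIdempotents P) (f g : ι → R) :
    (∑ k, f k • P k) * ∑ k, g k • P k = ∑ k, (f k * g k) • P k := by
  classical
  simp [Finset.sum_mul_sum, hP.mul_eq, smul_smul, mul_comm]

lemma sum_add_const_smul [Semiring R] [Semiring A] [Module R A] (hP : ∑ k, P k = 1)
    (f : ι → R) (c : R) :
    ∑ k, (f k + c) • P k = ∑ k, f k • P k + c • 1 := by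
  simp only [add_smul, Finset.sum_add_distrib, ← Finset.smul_sum, hP]

variable [Semifield R] [Semiring A] [Algebra R A] {f : ι → R}

lemma sum_smul_mul_sum_inv_smul (hP : CompleteOrthogonalIdempotents P) (hf : ∀ k, f k ≠ 0) :
    (∑ k, f k • P k) * ∑ k, (f k)⁻¹ • P k = 1 := by
  simp [sum_smul_mul_sum_smul hP.toOrthogonalIdempotents, hf, hP.complete]

lemma isUnit_sum_smul (hP : CompleteOrthogonalIdempotents P) (hf : ∀ k, f k ≠ 0) :
    IsUnit (∑ k, f k • P k) := by
  refine isUnit_iff_exists.2 ⟨_, sum_smul_mul_sum_inv_smul hP hf, ?_⟩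
  simpa using sum_smul_mul_sum_inv_smul hP fun k => inv_ne_zero (hf k)

lemma ringInverse_sum_smul (hP : CompleteOrthogonalIdempotents P) (hf : ∀ k, f k ≠ 0) :
    (∑ k, f k • P k)⁻¹ʳ = ∑ k, (f k)⁻¹ • P k := by
  rw [← mul_one (_⁻¹ʳ), Ring.inverse_mul_eq_iff_eq_mul _ _ _ (isUnit_sum_smul hP hf),
    sum_smul_mul_sum_inv_smul hP hf]

end Algebra

section Derivative

variable {ι 𝕜 E A : Type*} [NontriviallyNormedField 𝕜] [NormedAddCommGroup E] [NormedSpace 𝕜 E]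
  [NormedRing A] [NormedAlgebra 𝕜 A] {t : 𝕜}

lemma hasDerivAt_matrix_iff {m n : Type*} [Finite m] [Finite n] {M : 𝕜 → Matrix m n E}
    {M' : Matrix m n E} :
    HasDerivAt M M' t ↔ ∀ i j, HasDerivAt (fun s => M s i j) (M' i j) t := by
  cases nonempty_fintype m
  cases nonempty_fintype n
  exact hasDerivAt_pi.trans (forall_congr' fun _ => hasDerivAt_pi)

lemma hasDerivAt_ringInverse_comp [HasSummableGeomSeries A] {f : 𝕜 → A} {f' : A}
    (hf : HasDerivAt f f' t) (h : IsUnit (f t)) :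
    HasDerivAt (fun s => (f s)⁻¹ʳ) (-((f t)⁻¹ʳ * f' * (f t)⁻¹ʳ)) t := by
  obtain ⟨x, hx⟩ := h
  simpa [← hx] using (hx ▸ hasFDerivAt_ringInverse (𝕜 := 𝕜) x).comp_hasDerivAt t hf

variable [Fintype ι]

lemma sum_deriv_eq_zero_of_eventually_sum_eq_const {v : ι → 𝕜 → E} {v' : ι → E} {c : E}
    (hv : ∀ k, HasDerivAt (v k) (v' k) t) (hc : ∀ᶠ s in 𝓝 t, ∑ k, v k s = c) : ∑ k, v' k = 0 :=
  (HasDerivAt.fun_sum fun k _ => hv k).unique ((hasDerivAt_const t c).congr_of_eventuallyEq hc)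

variable {lam : ι → 𝕜 → 𝕜} {lam' : ι → 𝕜}

lemma hasDerivAt_sum_smul {v : ι → 𝕜 → E} {v' : ι → E}
    (hlam : ∀ k, HasDerivAt (lam k) (lam' k) t) (hv : ∀ k, HasDerivAt (v k) (v' k) t) :
    HasDerivAt (fun s => ∑ k, lam k s • v k s)
      (∑ k, lam' k • v k t + ∑ k, lam k t • v' k) t := by
  rw [add_comm, ← Finset.sum_add_distrib]
  exact HasDerivAt.fun_sum fun k _ => (hlam k).smul (hv k)

variable {P : ι → 𝕜 → A} {P' : ι → A} {ρ : 𝕜 → A} {ρ' : A}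

lemma ringInverse_mul_deriv_mul_ringInverse [HasSummableGeomSeries A]
    (hlam₀ : ∀ k, lam k t ≠ 0) (hlam : ∀ k, HasDerivAt (lam k) (lam' k) t)
    (hP : ∀ k, HasDerivAt (P k) (P' k) t)
    (hPt : ∀ᶠ s in 𝓝 t, CompleteOrthogonalIdempotents (P · s))
    (hρt : ∀ᶠ s in 𝓝 t, ρ s = ∑ k, lam k s • P k s) (hρ : HasDerivAt ρ ρ' t) :
    (ρ t)⁻¹ʳ * ρ' * (ρ t)⁻¹ʳ = ∑ k, (lam k t ^ 2)⁻¹ • lam' k • P k t -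
      ∑ k, (lam k t)⁻¹ • P' k := by
  have hne : ∀ᶠ s in 𝓝 t, ∀ k, lam k s ≠ 0 :=
    eventually_all.2 fun k => (hlam k).continuousAt.eventually_ne (hlam₀ k)
  have hunit : IsUnit (ρ t) := hρt.self_of_nhds ▸ isUnit_sum_smul hPt.self_of_nhds hlam₀
  have hinv : (fun s => (ρ s)⁻¹ʳ) =ᶠ[𝓝 t] fun s => ∑ k, (lam k s)⁻¹ • P k s := by
    filter_upwards [hne, hPt, hρt] with s hs hPs hρs
    rw [hρs, ringInverse_sum_smul hPs hs]
  have hspec := hasDerivAt_sum_smul (fun k => (hlam k).fun_inv (hlam₀ k)) hP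
  have hinvderiv := (hasDerivAt_ringInverse_comp hρ hunit).unique (hspec.congr_of_eventuallyEq hinv)
  rw [← neg_inj, hinvderiv]
  simp [sub_eq_add_neg, add_comm, smul_smul, div_eq_inv_mul]

lemma ringInverse_add_smul_one_mul_deriv_mul_ringInverse [HasSummableGeomSeries A] {u : 𝕜}
    (hu : ∀ k, lam k t + u ≠ 0) (hlam : ∀ k, HasDerivAt (lam k) (lam' k) t)
    (hP : ∀ k, HasDerivAt (P k) (P' k) t)
    (hPt : ∀ᶠ s in 𝓝 t, CompleteOrthogonalIdempotents (P · s))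
    (hρt : ∀ᶠ s in 𝓝 t, ρ s = ∑ k, lam k s • P k s) (hρ : HasDerivAt ρ ρ' t) (c : 𝕜) :
    (ρ t + u • 1)⁻¹ʳ * ρ' * (ρ t + u • 1)⁻¹ʳ =
      ∑ k, ((lam k t + u) ^ 2)⁻¹ • lam' k • P k t + ∑ k, (c - (lam k t + u)⁻¹) • P' k := by
  have hshift : ∀ᶠ s in 𝓝 t, ρ s + u • 1 = ∑ k, (lam k s + u) • P k s := by
    filter_upwards [hPt, hρt] with s hPs hρs
    rw [hρs, sum_add_const_smul hPs.complete]
  have hP'sum : ∑ k, P' k = 0 :=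
    sum_deriv_eq_zero_of_eventually_sum_eq_const hP (hPt.mono fun _ h => h.complete)
  rw [ringInverse_mul_deriv_mul_ringInverse (lam := fun k s => lam k s + u) hu
    (fun k => (hlam k).add_const u) hP hPt hshift (hρ.add_const _)]
  simp only [sub_smul, Finset.sum_sub_distrib, ← Finset.smul_sum, hP'sum, smul_zero, zero_sub]
  rw [sub_eq_add_neg]

end Derivative

section ScalarIntegrals

variable {a b : ℝ}

lemma hasDerivAt_neg_inv_const_add {u : ℝ} (h : a + u ≠ 0) :
    HasDerivAt (fun u => -(a + u)⁻¹) (((a + u) ^ 2)⁻¹) u := by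
  simpa [neg_div] using (((hasDerivAt_id u).const_add a).fun_inv h).fun_neg

lemma tendsto_neg_inv_const_add_atTop (a : ℝ) :
    Tendsto (fun u : ℝ => -(a + u)⁻¹) atTop (𝓝 0) := by
  simpa using (tendsto_atTop_add_const_left _ a tendsto_id).inv_tendsto_atTop.neg

lemma integrableOn_Ioi_inv_const_add_sq (ha : 0 < a) :
    IntegrableOn (fun u : ℝ => ((a + u) ^ 2)⁻¹) (Set.Ioi 0) :=
  integrableOn_Ioi_deriv_of_nonneg'
    (fun _ hu => hasDerivAt_neg_inv_const_add (add_pos_of_pos_of_nonneg ha hu).ne')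
    (fun _ _ => by positivity) (tendsto_neg_inv_const_add_atTop a)

lemma integral_Ioi_inv_const_add_sq (ha : 0 < a) :
    ∫ u in Set.Ioi (0 : ℝ), ((a + u) ^ 2)⁻¹ = a⁻¹ := by
  simpa using integral_Ioi_of_hasDerivAt_of_tendsto'
    (fun u hu => hasDerivAt_neg_inv_const_add (add_pos_of_pos_of_nonneg ha hu).ne')
    (integrableOn_Ioi_inv_const_add_sq ha) (tendsto_neg_inv_const_add_atTop a)

lemma hasDerivAt_log_const_add_sub_log_const_add {u : ℝ} (ha : a + u ≠ 0) (hb : b + u ≠ 0) :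
    HasDerivAt (fun u => Real.log (b + u) - Real.log (a + u)) ((b + u)⁻¹ - (a + u)⁻¹) u := by
  simpa using
    (((hasDerivAt_id u).const_add b).log hb).fun_sub (((hasDerivAt_id u).const_add a).log ha)

lemma tendsto_log_const_add_sub_log_const_add_atTop (a b : ℝ) :
    Tendsto (fun u => Real.log (b + u) - Real.log (a + u)) atTop (𝓝 0) := by
  simpa [add_comm] using
    (Real.tendsto_log_comp_add_sub_log b).sub (Real.tendsto_log_comp_add_sub_log a)

lemma integrableOn_Ioi_inv_const_add_sub_inv_const_add (ha : 0 < a) (hb : 0 < b) :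
    IntegrableOn (fun u : ℝ => (b + u)⁻¹ - (a + u)⁻¹) (Set.Ioi 0) := by
  wlog hab : a ≤ b generalizing a b
  · simpa [Pi.neg_def] using (this hb ha (le_of_not_ge hab)).neg
  refine integrableOn_Ioi_deriv_of_nonpos' (fun u (hu : 0 ≤ u) =>
    hasDerivAt_log_const_add_sub_log_const_add (by positivity) (by positivity))
    (fun u (hu : 0 < u) => ?_) (tendsto_log_const_add_sub_log_const_add_atTop a b)
  rw [sub_nonpos]
  gcongr

lemma integral_Ioi_inv_const_add_sub_inv_const_add (ha : 0 < a) (hb : 0 < b) :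
    ∫ u in Set.Ioi (0 : ℝ), ((b + u)⁻¹ - (a + u)⁻¹) = Real.log a - Real.log b := by
  simpa using integral_Ioi_of_hasDerivAt_of_tendsto' (fun u (hu : 0 ≤ u) =>
    hasDerivAt_log_const_add_sub_log_const_add (by positivity) (by positivity))
    (integrableOn_Ioi_inv_const_add_sub_inv_const_add ha hb)
    (tendsto_log_const_add_sub_log_const_add_atTop a b)

end ScalarIntegrals

theorem bvn_integral_representation_general {ι A : Type*} [Fintype ι] [NormedRing A]
    [NormedAlgebra ℝ A] [CompleteSpace A] {lam : ι → ℝ → ℝ} {lam' : ι → ℝ} {P : ι → ℝ → A}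
    {P' : ι → A} {ρ : ℝ → A} {ρ' : A} {θ : ℝ} (hlam₀ : ∀ k, 0 < lam k θ)
    (hlam : ∀ k, HasDerivAt (lam k) (lam' k) θ) (hP : ∀ k, HasDerivAt (P k) (P' k) θ)
    (hPθ : ∀ᶠ t in 𝓝 θ, CompleteOrthogonalIdempotents (P · t))
    (hρθ : ∀ᶠ t in 𝓝 θ, ρ t = ∑ k, lam k t • P k t) (hρ : HasDerivAt ρ ρ' θ) :
    IntegrableOn (fun u : ℝ => (ρ θ + u • 1)⁻¹ʳ * ρ' * (ρ θ + u • 1)⁻¹ʳ) (Set.Ioi 0) ∧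
      ∫ u in Set.Ioi (0 : ℝ), (ρ θ + u • 1)⁻¹ʳ * ρ' * (ρ θ + u • 1)⁻¹ʳ =
        ∑ k, (lam' k / lam k θ) • P k θ + ∑ k, Real.log (lam k θ) • P' k := by
  have hsq : ∀ k ∈ Finset.univ, Integrable
      (fun u : ℝ => ((lam k θ + u) ^ 2)⁻¹ • lam' k • P k θ) (volume.restrict (Set.Ioi 0)) :=
    fun k _ => (integrableOn_Ioi_inv_const_add_sq (hlam₀ k)).smul_const _
  have hlog : ∀ k ∈ Finset.univ, Integrable
      (fun u : ℝ => ((1 + u)⁻¹ - (lam k θ + u)⁻¹) • P' k) (volume.restrict (Set.Ioi 0)) :=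
    fun k _ => (integrableOn_Ioi_inv_const_add_sub_inv_const_add (hlam₀ k) one_pos).smul_const _
  have hresolvent : Set.EqOn (fun u : ℝ => (ρ θ + u • 1)⁻¹ʳ * ρ' * (ρ θ + u • 1)⁻¹ʳ)
      (fun u => ∑ k, ((lam k θ + u) ^ 2)⁻¹ • lam' k • P k θ +
        ∑ k, ((1 + u)⁻¹ - (lam k θ + u)⁻¹) • P' k) (Set.Ioi 0) := by
    intro u (hu : 0 < u)
    exact ringInverse_add_smul_one_mul_deriv_mul_ringInverse
      (fun k => (add_pos (hlam₀ k) hu).ne') hlam hP hPθ hρθ hρ (1 + u)⁻¹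
  constructor
  · exact IntegrableOn.congr_fun ((integrable_finsetSum _ hsq).add (integrable_finsetSum _ hlog))
      hresolvent.symm measurableSet_Ioi
  · rw [setIntegral_congr_fun measurableSet_Ioi hresolvent,
      integral_add (integrable_finsetSum _ hsq) (integrable_finsetSum _ hlog),
      integral_finsetSum _ hsq, integral_finsetSum _ hlog]
    simp only [integral_smul_const, integral_Ioi_inv_const_add_sq (hlam₀ _),
      integral_Ioi_inv_const_add_sub_inv_const_add (hlam₀ _) one_pos, Real.log_one, sub_zero]
    simp only [smul_smul, inv_mul_eq_div]

/-- For `ρ_θ = Σ_k λ_k(θ)P_k(θ)` (spectral decomposition with distinct eigenvalues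
`λ_k(θ) ∈ (0,1)` and differentiable mutually orthogonal Hermitian projections summing to `I`),
the improper integral `∫₀^∞ (ρ_θ + u)^{−1} ρ_θ' (ρ_θ + u)^{−1} du` converges (entrywise) and
equals the Boltzmann–von Neumann logarithmic derivative
`Σ_k (λ_k'(θ)/λ_k(θ))P_k(θ) + Σ_k (ln λ_k(θ))P_k'(θ)`, where
`ρ_θ' = Σ_k λ_k'(θ)P_k(θ) + Σ_k λ_k(θ)P_k'(θ)`. -/
theorem bvn_integral_representation {n N : ℕ}
    (lam lam' : Fin N → ℝ → ℝ)
    (P P' : Fin N → ℝ → Matrix (Fin n) (Fin n) ℂ)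
    (hlam : ∀ k θ, lam k θ ∈ Set.Ioo (0 : ℝ) 1)
    (hlamdist : ∀ j k θ, j ≠ k → lam j θ ≠ lam k θ)
    (hlamderiv : ∀ k θ, HasDerivAt (lam k) (lam' k θ) θ)
    (hPderiv : ∀ k i₁ i₂ θ, HasDerivAt (fun t => P k t i₁ i₂) (P' k θ i₁ i₂) θ)
    (hherm : ∀ k θ, (P k θ).IsHermitian)
    (horth : ∀ j k θ, P j θ * P k θ = if j = k then P j θ else 0)
    (hsum : ∀ θ, ∑ k, P k θ = 1)
    (ρ ρ' : ℝ → Matrix (Fin n) (Fin n) ℂ)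
    (hρ : ∀ θ, ρ θ = ∑ k, ((lam k θ : ℝ) : ℂ) • P k θ)
    (hρ' : ∀ θ, ρ' θ = ∑ k, ((lam' k θ : ℝ) : ℂ) • P k θ +
        ∑ k, ((lam k θ : ℝ) : ℂ) • P' k θ) :
    ∀ (θ : ℝ) (i j : Fin n),
      IntegrableOn
        (fun u : ℝ => ((ρ θ + (u : ℂ) • 1)⁻¹ * ρ' θ * (ρ θ + (u : ℂ) • 1)⁻¹) i j)
        (Set.Ioi 0) ∧
      (∫ u in Set.Ioi (0 : ℝ),
          ((ρ θ + (u : ℂ) • 1)⁻¹ * ρ' θ * (ρ θ + (u : ℂ) • 1)⁻¹) i j) =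
        (∑ k, ((lam' k θ / lam k θ : ℝ) : ℂ) • P k θ +
          ∑ k, ((Real.log (lam k θ) : ℝ) : ℂ) • P' k θ) i j := by
  intro θ i j
  open scoped Matrix.Norms.Operator in
  have hP (t : ℝ) : CompleteOrthogonalIdempotents (P · t) :=
    ⟨OrthogonalIdempotents.iff_mul_eq.2 fun k l => horth k l t, hsum t⟩
  have hP' (k : Fin N) : HasDerivAt (P k) (P' k θ) θ :=
    hasDerivAt_matrix_iff.2 fun i₁ i₂ => hPderiv k i₁ i₂ θ
  simp only [Complex.coe_smul] at hρ hρ' ⊢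
  have hρderiv : HasDerivAt ρ (ρ' θ) θ := by
    rw [hρ', funext hρ]
    exact hasDerivAt_sum_smul (fun k => hlamderiv k θ) hP'
  obtain ⟨hint, heq⟩ := bvn_integral_representation_general (fun k => (hlam k θ).1)
    (fun k => hlamderiv k θ) hP' (.of_forall hP) (.of_forall hρ) hρderiv
  simp only [nonsing_inv_eq_ringInverse]
  let entry : Matrix (Fin n) (Fin n) ℂ →L[ℝ] ℂ :=
    (Matrix.entryLinearMap ℝ ℂ i j).toContinuousLinearMap
  exact ⟨entry.integrable_comp hint, (entry.integral_comp_comm hint).trans (congrArg entry heq)⟩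
end

section
/- Maximality of the Boltzmann–von Neumann likelihood operator in expectation: let ρ : ℝ → M_n(ℂ) be a differentiable family of positive definite Hermitian matrices and H : ℝ → M_n(ℂ) a differentiable family of Hermitian matrices such that for all θ, ρ'(θ) = ∫₀¹ ρ(θ)^t H(θ) ρ(θ)^{1−t} dt and Tr(ρ(θ)H(θ)) = 0. Then for every θ, Tr(ρ(θ)H'(θ)) = −∫₀¹ Tr(ρ(θ)^t H(θ) ρ(θ)^{1−t} H(θ)) dt; in particular the expectation Tr(ρH') equals −I(θ) ≤ 0 where I(θ) = ∫₀¹ Tr(ρ^t H ρ^{1−t} H) dt is the quantum Fisher information in the Boltzmann–von Neumann model. -/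
open Matrix
open scoped ComplexOrder

/-- The `s`-th power `ρ^s` of a positive definite matrix `ρ`, defined spectrally. -/
noncomputable def mpow {n : ℕ} {ρ : Matrix (Fin n) (Fin n) ℂ} (hρ : ρ.PosDef)
    (s : ℝ) : Matrix (Fin n) (Fin n) ℂ :=
  hρ.1.cfc fun x : ℝ => x ^ s

/-!
Differentiating `Tr(ρ H)` and inserting the Kubo–Mori–Bogoliubov equation for `ρ'` gives
`d/dθ Tr(ρ H) = I(θ) + Tr(ρ H')`, so `Tr(ρ H') = -I(θ)` as soon as `Tr(ρ H)` is constant.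
The information `I(θ)` is nonnegative because its integrand `Tr(ρ^t · H ρ^{1-t} H)` is the trace
of a product of two positive semidefinite matrices.
-/

section Matrix

variable {𝕜 A ι κ : Type*}

theorem hasDerivAt_trace_mul [Fintype ι] [Fintype κ] [NontriviallyNormedField 𝕜] [NormedRing A]
    [NormedAlgebra 𝕜 A] {M : 𝕜 → Matrix ι κ A} {M' : Matrix ι κ A} {N : 𝕜 → Matrix κ ι A}
    {N' : Matrix κ ι A} {x : 𝕜} (hM : ∀ i j, HasDerivAt (fun t => M t i j) (M' i j) x)
    (hN : ∀ j i, HasDerivAt (fun t => N t j i) (N' j i) x) :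
    HasDerivAt (fun t => (M t * N t).trace) ((M' * N x).trace + (M x * N').trace) x := by
  simp only [trace, diag_apply, mul_apply, ← Finset.sum_add_distrib]
  exact HasDerivAt.fun_sum fun i _ => HasDerivAt.fun_sum fun j _ => (hM i j).mul (hN j i)

variable [RCLike 𝕜]

theorem intervalIntegral_trace_mul_const [Fintype ι] [Fintype κ] {F : ℝ → Matrix ι κ 𝕜}
    {μ : MeasureTheory.Measure ℝ} {a b : ℝ}
    (hF : ∀ i j, IntervalIntegrable (fun t => F t i j) μ a b) (N : Matrix κ ι 𝕜) :
    ∫ t in a..b, (F t * N).trace ∂μ = ((of fun i j => ∫ t in a..b, F t i j ∂μ) * N).trace := by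
  simp only [trace, diag_apply, mul_apply, of_apply, ← Fintype.sum_prod_type']
  rw [intervalIntegral.integral_finsetSum fun p _ => (hF p.1 p.2).mul_const _]
  simp only [intervalIntegral.integral_mul_const]

variable [Fintype ι]

open scoped MatrixOrder in
theorem trace_mul_nonneg_of_posSemidef {M N : Matrix ι ι 𝕜} (hM : M.PosSemidef)
    (hN : N.PosSemidef) : 0 ≤ (M * N).trace := by
  classical
  have hsqrt : (CFC.sqrt M).IsHermitian := (CFC.sqrt_nonneg M).posSemidef.isHermitian
  rw [← CFC.sqrt_mul_sqrt_self M hM.nonneg, ← trace_mul_cycle]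
  simpa only [hsqrt.eq] using (hN.mul_mul_conjTranspose_same (CFC.sqrt M)).trace_nonneg

variable [DecidableEq ι] {M : Matrix ι ι 𝕜}

theorem posSemidef_cfc_of_eigenvalues_nonneg (hM : M.IsHermitian) {f : ℝ → ℝ}
    (hf : ∀ i, 0 ≤ f (hM.eigenvalues i)) : (hM.cfc f).PosSemidef := by
  have hdiag : (diagonal (RCLike.ofReal ∘ f ∘ hM.eigenvalues) : Matrix ι ι 𝕜).PosSemidef :=
    posSemidef_diagonal_iff.mpr fun i => RCLike.ofReal_nonneg.mpr (hf i)
  exact hdiag.mul_mul_conjTranspose_same _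

theorem continuous_cfc_of_continuous_eigenvalues {X : Type*} [TopologicalSpace X]
    (hM : M.IsHermitian) {f : X → ℝ → ℝ}
    (hf : ∀ i, Continuous fun x => f x (hM.eigenvalues i)) :
    Continuous fun x => hM.cfc (f x) := by
  have hdiag : Continuous fun x =>
      (diagonal (RCLike.ofReal ∘ f x ∘ hM.eigenvalues) : Matrix ι ι 𝕜) :=
    (continuous_pi fun i => RCLike.continuous_ofReal.comp (hf i)).matrix_diagonal
  exact (continuous_const.matrix_mul hdiag).matrix_mul continuous_const

end Matrix

section FisherInformation

variable {n : ℕ} {ρ : Matrix (Fin n) (Fin n) ℂ}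

theorem posSemidef_mpow (hρ : ρ.PosDef) (s : ℝ) : (mpow hρ s).PosSemidef :=
  posSemidef_cfc_of_eigenvalues_nonneg hρ.1 fun i => Real.rpow_nonneg (hρ.eigenvalues_pos i).le s

theorem continuous_mpow (hρ : ρ.PosDef) : Continuous (mpow hρ) :=
  continuous_cfc_of_continuous_eigenvalues hρ.1 fun i =>
    Real.continuous_const_rpow (hρ.eigenvalues_pos i).ne'

theorem trace_mpow_mul_mul_mpow_mul_conjTranspose_nonneg (hρ : ρ.PosDef)
    (X : Matrix (Fin n) (Fin n) ℂ) (s r : ℝ) :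
    0 ≤ (mpow hρ s * X * mpow hρ r * Xᴴ).trace := by
  simpa only [Matrix.mul_assoc] using trace_mul_nonneg_of_posSemidef (posSemidef_mpow hρ s)
    ((posSemidef_mpow hρ r).mul_mul_conjTranspose_same X)

/-- The quantum Fisher information `I = ∫₀¹ Tr(ρ^t X ρ^{1-t} X) dt` of the Boltzmann–von Neumann
model at the state `ρ` with logarithmic derivative `X`. It is kept complex-valued, since `X` is not
required to be Hermitian. -/
noncomputable def bvnFisherInfo (hρ : ρ.PosDef) (X : Matrix (Fin n) (Fin n) ℂ) : ℂ :=
  ∫ t in (0 : ℝ)..1, (mpow hρ t * X * mpow hρ (1 - t) * X).trace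

theorem bvnFisherInfo_nonneg (hρ : ρ.PosDef) {X : Matrix (Fin n) (Fin n) ℂ}
    (hX : X.IsHermitian) : 0 ≤ bvnFisherInfo hρ X := by
  have hintegrand (t : ℝ) : 0 ≤ (mpow hρ t * X * mpow hρ (1 - t) * X).trace := by
    simpa only [hX.eq] using trace_mpow_mul_mul_mpow_mul_conjTranspose_nonneg hρ X t (1 - t)
  rw [bvnFisherInfo, intervalIntegral.integral_of_le zero_le_one]
  exact MeasureTheory.integral_nonneg hintegrand

theorem trace_kmb_mul_eq_bvnFisherInfo (hρ : ρ.PosDef) {ρ' X : Matrix (Fin n) (Fin n) ℂ}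
    (hkmb : ∀ i j, ρ' i j = ∫ t in (0 : ℝ)..1, (mpow hρ t * X * mpow hρ (1 - t)) i j) :
    (ρ' * X).trace = bvnFisherInfo hρ X := by
  have hcont : Continuous fun t => mpow hρ t * X * mpow hρ (1 - t) :=
    ((continuous_mpow hρ).matrix_mul continuous_const).matrix_mul
      ((continuous_mpow hρ).comp (continuous_sub_left 1))
  rw [bvnFisherInfo,
    intervalIntegral_trace_mul_const fun i j => (hcont.matrix_elem i j).intervalIntegrable 0 1]
  congr 2
  exact Matrix.ext hkmb

theorem hasDerivAt_trace_mul_of_kmb {ρ H : ℝ → Matrix (Fin n) (Fin n) ℂ}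
    {ρ' H' : Matrix (Fin n) (Fin n) ℂ} {θ : ℝ} (hρ : (ρ θ).PosDef)
    (hρderiv : ∀ i j, HasDerivAt (fun t => ρ t i j) (ρ' i j) θ)
    (hHderiv : ∀ i j, HasDerivAt (fun t => H t i j) (H' i j) θ)
    (hkmb : ∀ i j, ρ' i j = ∫ t in (0 : ℝ)..1, (mpow hρ t * H θ * mpow hρ (1 - t)) i j) :
    HasDerivAt (fun t => (ρ t * H t).trace) (bvnFisherInfo hρ (H θ) + (ρ θ * H').trace) θ :=
  trace_kmb_mul_eq_bvnFisherInfo hρ hkmb ▸ hasDerivAt_trace_mul hρderiv hHderiv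

end FisherInformation

/-- Maximality of the Boltzmann–von Neumann likelihood operator in expectation: let
`ρ : ℝ → Mₙ(ℂ)` be a differentiable family of positive definite Hermitian matrices and
`H : ℝ → Mₙ(ℂ)` a differentiable family of Hermitian matrices with
`ρ'(θ) = ∫₀¹ ρ(θ)^t H(θ) ρ(θ)^{1−t} dt` and `Tr(ρ(θ)H(θ)) = 0` for all `θ`.
Then `Tr(ρ(θ)H'(θ)) = −∫₀¹ Tr(ρ(θ)^t H(θ) ρ(θ)^{1−t} H(θ)) dt`; in particular
`Re Tr(ρ(θ)H'(θ)) = −I(θ) ≤ 0` where `I(θ)` is the Boltzmann–von Neumann quantum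
Fisher information. -/
theorem bvn_likelihood_maximality {n : ℕ}
    (ρ ρ' H H' : ℝ → Matrix (Fin n) (Fin n) ℂ)
    (hρ : ∀ θ, (ρ θ).PosDef)
    (hρderiv : ∀ i j θ, HasDerivAt (fun t => ρ t i j) (ρ' θ i j) θ)
    (hH : ∀ θ, (H θ).IsHermitian)
    (hHderiv : ∀ i j θ, HasDerivAt (fun t => H t i j) (H' θ i j) θ)
    (hkmb : ∀ (θ : ℝ) (i j : Fin n),
      ρ' θ i j = ∫ t in (0 : ℝ)..1, (mpow (hρ θ) t * H θ * mpow (hρ θ) (1 - t)) i j)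
    (hexp : ∀ θ, (ρ θ * H θ).trace = 0) :
    ∀ θ : ℝ,
      (ρ θ * H' θ).trace =
        -∫ t in (0 : ℝ)..1, (mpow (hρ θ) t * H θ * mpow (hρ θ) (1 - t) * H θ).trace ∧
      ((ρ θ * H' θ).trace).re ≤ 0 := by
  intro θ
  have hderiv : HasDerivAt (fun t => (ρ t * H t).trace)
      (bvnFisherInfo (hρ θ) (H θ) + (ρ θ * H' θ).trace) θ :=
    hasDerivAt_trace_mul_of_kmb (hρ θ) (hρderiv · · θ) (hHderiv · · θ) (hkmb θ)
  have hstationary : HasDerivAt (fun t => (ρ t * H t).trace) 0 θ := by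
    simpa only [hexp] using hasDerivAt_const θ (0 : ℂ)
  have htrace : (ρ θ * H' θ).trace = -bvnFisherInfo (hρ θ) (H θ) :=
    eq_neg_of_add_eq_zero_right (hderiv.unique hstationary)
  refine ⟨htrace, ?_⟩
  rw [htrace, Complex.neg_re, neg_nonpos]
  exact (Complex.le_def.mp (bvnFisherInfo_nonneg (hρ θ) (hH θ))).1
end

section
/- Relative entropy and quantum Fisher information in the Boltzmann–von Neumann model: let θ ↦ ρ_θ be a family of positive definite Hermitian n×n density matrices such that L(θ) := ln ρ_θ (matrix logarithm defined spectrally) is twice continuously differentiable in θ, and set H(θ) = L'(θ). Then for each θ, lim_{ε→0} ε^{−2} S_rel(ρ_{θ+ε} ‖ ρ_θ) = (1/2) ∫₀¹ Tr(ρ_θ^t H(θ) ρ_θ^{1−t} H(θ)) dt, where S_rel(ρ‖σ) = Tr(ρ(ln ρ − ln σ)) is the Kullback–Leibler quantum relative entropy; i.e., lim_{ε→0} (2/ε²) S_rel(ρ_{θ+ε}‖ρ_θ) equals the Boltzmann–von Neumann quantum Fisher information I(θ) = ∫₀¹ Tr(ρ_θ^t H ρ_θ^{1−t} H) dt. -/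
open Matrix Filter
open scoped ComplexOrder Topology

/-!
With `A = ln σ` and `B = ln ρ`, the quantity `Tr (ρ (ln ρ - ln σ)) - Tr ρ + Tr σ` is the Bregman
divergence at `(A, B)` of the convex function `X ↦ Tr e^X`, whose second derivative, by Duhamel's
formula, is the Kubo–Mori–Bogoliubov form. Taylor's formula with integral remainder therefore gives
`∫₀¹ s K(A + s (B - A); B - A) ds`. For `A = L(θ)` and `B = L(θ + ε)` the increment is
`ε H(θ) + o(ε)`, so dividing by `ε²` and using the joint continuity of `K` leaves
`∫₀¹ s ds · K(L(θ); H(θ))`. For density matrices the two traces cancel.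
-/

section ExpCalculus

open NormedSpace

variable {𝔸 : Type*} [NormedRing 𝔸] [NormedAlgebra ℝ 𝔸]

/-- Duhamel's integral `∫₀¹ e^{tY} D e^{(1-t)X} dt`. At `Y = X` it is the derivative of the
exponential at `X` in the direction `D`; at `D = Y - X` it is the difference `e^Y - e^X`. -/
noncomputable def duhamelIntegral (X Y D : 𝔸) : 𝔸 :=
  ∫ t in (0 : ℝ)..1, exp (t • Y) * D * exp ((1 - t) • X)

lemma duhamelIntegral_smul (X Y D : 𝔸) (c : ℝ) :
    duhamelIntegral X Y (c • D) = c • duhamelIntegral X Y D := by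
  simp only [duhamelIntegral, mul_smul_comm, smul_mul_assoc, intervalIntegral.integral_smul]

variable [CompleteSpace 𝔸]

lemma continuous_exp_of_real : Continuous (exp : 𝔸 → 𝔸) :=
  let : NormedAlgebra ℚ 𝔸 := .restrictScalars ℚ ℝ 𝔸
  exp_continuous

lemma exp_smul_mul_exp_smul (a b : ℝ) (X : 𝔸) : exp (a • X) * exp (b • X) = exp ((a + b) • X) := by
  let : NormedAlgebra ℚ 𝔸 := .restrictScalars ℚ ℝ 𝔸
  rw [add_smul, exp_add_of_commute (((Commute.refl X).smul_left a).smul_right b)]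

lemma continuous_duhamelIntegral (X : 𝔸) :
    Continuous fun p : 𝔸 × 𝔸 => duhamelIntegral X p.1 p.2 := by
  have hexp : Continuous (exp : 𝔸 → 𝔸) := continuous_exp_of_real
  refine intervalIntegral.continuous_parametric_intervalIntegral_of_continuous' ?_ 0 1
  fun_prop

lemma exp_sub_exp_eq_duhamelIntegral (X Y : 𝔸) : exp Y - exp X = duhamelIntegral X Y (Y - X) := by
  have hexp : Continuous (exp : 𝔸 → 𝔸) := continuous_exp_of_real
  have hderiv (t : ℝ) : HasDerivAt (fun t : ℝ => exp (t • Y) * exp ((1 - t) • X))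
      (exp (t • Y) * (Y - X) * exp ((1 - t) • X)) t := by
    have hY := hasDerivAt_exp_smul_const (𝕂 := ℝ) Y t
    have hX := (hasDerivAt_exp_smul_const' (𝕂 := ℝ) X (1 - t)).scomp t
      ((hasDerivAt_id t).const_sub 1)
    refine (hY.mul hX).congr_deriv ?_
    simp only [Function.comp, neg_smul, one_smul]
    noncomm_ring
  rw [duhamelIntegral, intervalIntegral.integral_eq_sub_of_hasDerivAt (fun t _ => hderiv t)
    (Continuous.intervalIntegrable (by fun_prop) _ _)]
  simp

lemma hasDerivAt_exp_comp {L : ℝ → 𝔸} {H : 𝔸} {θ : ℝ} (hL : HasDerivAt L H θ) :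
    HasDerivAt (fun t => exp (L t)) (duhamelIntegral (L θ) (L θ) H) θ := by
  rw [hasDerivAt_iff_tendsto_slope]
  have hlim : Tendsto (fun t => duhamelIntegral (L θ) (L t) (slope L θ t)) (𝓝[≠] θ)
      (𝓝 (duhamelIntegral (L θ) (L θ) H)) :=
    ((continuous_duhamelIntegral (L θ)).tendsto (L θ, H)).comp
      ((hL.continuousAt.mono_left nhdsWithin_le_nhds).prodMk_nhds
        (hasDerivAt_iff_tendsto_slope.1 hL))
  refine hlim.congr fun t => ?_
  simp only [slope_def_module, duhamelIntegral_smul, exp_sub_exp_eq_duhamelIntegral]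

end ExpCalculus

section TracialFunctional

open NormedSpace

variable {𝔸 E : Type*} [NormedRing 𝔸] [NormedAlgebra ℝ 𝔸]
  [NormedAddCommGroup E] [NormedSpace ℝ E] (τ : 𝔸 →L[ℝ] E)

/-- The Kubo–Mori–Bogoliubov quadratic form `∫₀¹ τ(e^{tX} D e^{(1-t)X} D) dt` at the state `e^X`. -/
noncomputable def kuboMori (X D : 𝔸) : E :=
  ∫ t in (0 : ℝ)..1, τ (exp (t • X) * D * exp ((1 - t) • X) * D)

/-- The unnormalised relative entropy `τ(e^B (B - A)) - τ(e^B) + τ(e^A)` of `e^B` with respect to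
`e^A`, that is, the Bregman divergence of `X ↦ τ(e^X)`. It is parametrised by the logarithms. -/
noncomputable def expRelEntropy (B A : 𝔸) : E :=
  τ (exp B * (B - A)) - (τ (exp B) - τ (exp A))

lemma kuboMori_smul (X D : 𝔸) (c : ℝ) : kuboMori τ X (c • D) = c ^ 2 • kuboMori τ X D := by
  simp only [kuboMori, mul_smul_comm, smul_mul_assoc, map_smul, intervalIntegral.integral_smul,
    smul_smul, sq]

variable [CompleteSpace 𝔸]

lemma continuous_kuboMori : Continuous fun p : 𝔸 × 𝔸 => kuboMori τ p.1 p.2 := by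
  have hexp : Continuous (exp : 𝔸 → 𝔸) := continuous_exp_of_real
  refine intervalIntegral.continuous_parametric_intervalIntegral_of_continuous' ?_ 0 1
  fun_prop

variable [CompleteSpace E]

lemma map_duhamelIntegral_mul (X D M : 𝔸) :
    τ (duhamelIntegral X X D * M) =
      ∫ t in (0 : ℝ)..1, τ (exp (t • X) * D * exp ((1 - t) • X) * M) := by
  have hexp : Continuous (exp : 𝔸 → 𝔸) := continuous_exp_of_real
  exact ((τ.comp ((ContinuousLinearMap.mul ℝ 𝔸).flip M)).intervalIntegral_comp_comm
    (Continuous.intervalIntegrable (by fun_prop) _ _)).symm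

variable {τ}

lemma map_duhamelIntegral_self (hτ : ∀ a b, τ (a * b) = τ (b * a)) (X D : 𝔸) :
    τ (duhamelIntegral X X D) = τ (exp X * D) := by
  have hcyc (t : ℝ) : τ (exp (t • X) * D * exp ((1 - t) • X)) = τ (exp X * D) := by
    rw [hτ, ← mul_assoc, exp_smul_mul_exp_smul, sub_add_cancel, one_smul]
  simpa [hcyc] using map_duhamelIntegral_mul τ X D 1

lemma expRelEntropy_eq_integral_kuboMori (hτ : ∀ a b, τ (a * b) = τ (b * a)) (B A : 𝔸) :
    expRelEntropy τ B A = ∫ s in (0 : ℝ)..1, s • kuboMori τ (A + s • (B - A)) (B - A) := by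
  set D := B - A with hD
  have hexp (s : ℝ) : HasDerivAt (fun s : ℝ => exp (A + s • D))
      (duhamelIntegral (A + s • D) (A + s • D) D) s :=
    hasDerivAt_exp_comp (by simpa using ((hasDerivAt_id s).smul_const D).const_add A)
  have hderiv (s : ℝ) : HasDerivAt
      (fun s : ℝ => s • τ (exp (A + s • D) * D) - τ (exp (A + s • D)))
      (s • kuboMori τ (A + s • D) D) s := by
    have hlin := τ.hasFDerivAt.comp_hasDerivAt s ((hexp s).mul_const D)
    have hval := τ.hasFDerivAt.comp_hasDerivAt s (hexp s)
    refine (((hasDerivAt_id s).smul hlin).sub hval).congr_deriv ?_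
    simp [map_duhamelIntegral_mul, map_duhamelIntegral_self hτ, kuboMori]
  have hcont : Continuous fun s : ℝ => s • kuboMori τ (A + s • D) D :=
    continuous_id.smul ((continuous_kuboMori τ).comp
      (by fun_prop : Continuous fun s : ℝ => (A + s • D, D)))
  rw [intervalIntegral.integral_eq_sub_of_hasDerivAt (fun s _ => hderiv s)
    (hcont.intervalIntegrable 0 1)]
  simp [expRelEntropy, hD, sub_add]

theorem tendsto_expRelEntropy (hτ : ∀ a b, τ (a * b) = τ (b * a)) {L : ℝ → 𝔸} {H : 𝔸} {θ : ℝ}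
    (hL : HasDerivAt L H θ) :
    Tendsto (fun ε : ℝ => (ε ^ 2)⁻¹ • expRelEntropy τ (L (θ + ε)) (L θ)) (𝓝[≠] 0)
      (𝓝 ((1 / 2 : ℝ) • kuboMori τ (L θ) H)) := by
  let G (p : 𝔸 × 𝔸) : E := ∫ s in (0 : ℝ)..1, s • kuboMori τ (L θ + s • p.1) p.2
  have hG : Continuous G := by
    refine intervalIntegral.continuous_parametric_intervalIntegral_of_continuous' ?_ 0 1
    exact continuous_snd.smul ((continuous_kuboMori τ).comp
      (by fun_prop : Continuous fun q : (𝔸 × 𝔸) × ℝ => (L θ + q.2 • q.1.1, q.1.2)))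
  have hincr : Tendsto (fun ε : ℝ => L (θ + ε) - L θ) (𝓝[≠] 0) (𝓝 0) := by
    have : ContinuousAt (fun ε : ℝ => L (θ + ε) - L θ) 0 := by
      refine ContinuousAt.sub (ContinuousAt.comp ?_ (by fun_prop)) continuousAt_const
      simpa using hL.continuousAt
    simpa [ContinuousAt] using this.mono_left nhdsWithin_le_nhds
  have hlim := (hG.tendsto (0, H)).comp
    (hincr.prodMk_nhds (hasDerivAt_iff_tendsto_slope_zero.1 hL))
  have hG0 : G (0, H) = (1 / 2 : ℝ) • kuboMori τ (L θ) H := by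
    simp [G, intervalIntegral.integral_smul_const]
  rw [← hG0]
  refine hlim.congr fun ε => ?_
  simp only [Function.comp, G, kuboMori_smul, expRelEntropy_eq_integral_kuboMori hτ,
    ← intervalIntegral.integral_smul, inv_pow]
  exact intervalIntegral.integral_congr fun s _ => smul_comm _ _ _

end TracialFunctional

section FunctionalCalculus

open NormedSpace

variable {A : Type*} [NormedRing A] [StarRing A] [NormedAlgebra ℝ A]
  [ContinuousFunctionalCalculus ℝ A IsSelfAdjoint]

lemma exp_smul_cfc_log {a : A} (ha : IsSelfAdjoint a) (hpos : ∀ x ∈ spectrum ℝ a, 0 < x) (s : ℝ) :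
    exp (s • cfc Real.log a) = cfc (fun x : ℝ => x ^ s) a := by
  have hlog : ContinuousOn Real.log (spectrum ℝ a) :=
    Real.continuousOn_log.mono fun x hx => (hpos x hx).ne'
  rw [← cfc_smul s Real.log a, ← CFC.real_exp_eq_normedSpace_exp, ← cfc_comp' ..]
  refine cfc_congr fun x hx => ?_
  rw [Real.rpow_def_of_pos (hpos x hx), smul_eq_mul, mul_comm]

end FunctionalCalculus

section Matrix

open NormedSpace

lemma hasDerivAt_matrix {m n K F : Type*} [Finite m] [Finite n] [NontriviallyNormedField K]
    [NormedAddCommGroup F] [NormedSpace K F] {L : K → Matrix m n F} {H : Matrix m n F} {x : K}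
    (hL : ∀ i j, HasDerivAt (fun t => L t i j) (H i j) x) : HasDerivAt L H x := by
  cases nonempty_fintype m
  cases nonempty_fintype n
  open scoped Matrix.Norms.Elementwise in
  exact hasDerivAt_pi.2 fun i => hasDerivAt_pi.2 (hL i)

variable {m 𝕜 : Type*} [Fintype m] [DecidableEq m] [RCLike 𝕜]

lemma tendsto_trace_exp_relEntropy {L : ℝ → Matrix m m 𝕜} {H : Matrix m m 𝕜} {θ : ℝ}
    (hL : HasDerivAt L H θ) :
    Tendsto
      (fun ε : ℝ => (ε ^ 2)⁻¹ • ((exp (L (θ + ε)) * (L (θ + ε) - L θ)).trace -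
        ((exp (L (θ + ε))).trace - (exp (L θ)).trace)))
      (𝓝[≠] 0)
      (𝓝 ((1 / 2 : ℝ) • ∫ t in (0 : ℝ)..1,
        (exp (t • L θ) * H * exp ((1 - t) • L θ) * H).trace)) := by
  open scoped Matrix.Norms.Operator in
  let τ : Matrix m m 𝕜 →L[ℝ] 𝕜 := LinearMap.toContinuousLinearMap (traceLinearMap m ℝ 𝕜)
  have hτ (a b : Matrix m m 𝕜) : τ (a * b) = τ (b * a) := trace_mul_comm a b
  exact tendsto_expRelEntropy hτ hL

lemma exp_smul_cfc_log_of_posDef {ρ : Matrix m m 𝕜} (hρ : ρ.PosDef) (s : ℝ) :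
    exp (s • hρ.1.cfc Real.log) = hρ.1.cfc fun x => x ^ s := by
  open scoped Matrix.Norms.Operator in
  -- The library instance is for the entrywise topology; the norm topology is needed here.
  let : @ContinuousFunctionalCalculus ℝ (Matrix m m 𝕜) IsSelfAdjoint _ _ _ _ _ _ _
    PseudoMetricSpace.toUniformSpace.toTopologicalSpace _ :=
      IsHermitian.instContinuousFunctionalCalculus
  have hpos : ∀ x ∈ spectrum ℝ ρ, 0 < x := by
    rw [hρ.1.spectrum_real_eq_range_eigenvalues]
    rintro _ ⟨i, rfl⟩
    exact hρ.eigenvalues_pos i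
  simp only [← hρ.1.cfc_eq]
  exact exp_smul_cfc_log hρ.1.isSelfAdjoint hpos s

lemma exp_cfc_log_of_posDef {ρ : Matrix m m 𝕜} (hρ : ρ.PosDef) :
    exp (hρ.1.cfc Real.log) = ρ := by
  simpa [← hρ.1.cfc_eq, cfc_id' ℝ ρ hρ.1.isSelfAdjoint] using exp_smul_cfc_log_of_posDef hρ 1

theorem relEntropy_qfi_bvn_general (ρ L : ℝ → Matrix m m 𝕜) (H : Matrix m m 𝕜) (θ : ℝ)
    (hρ : ∀ t, (ρ t).PosDef)
    (hL : ∀ t, L t = (hρ t).1.cfc Real.log)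
    (hH : ∀ i j, HasDerivAt (fun t => L t i j) (H i j) θ) :
    Tendsto
      (fun ε : ℝ => (ε ^ 2)⁻¹ • ((ρ (θ + ε) * (L (θ + ε) - L θ)).trace -
        ((ρ (θ + ε)).trace - (ρ θ).trace)))
      (𝓝[≠] 0)
      (𝓝 ((1 / 2 : ℝ) • ∫ t in (0 : ℝ)..1,
        (((hρ θ).1.cfc fun x => x ^ t) * H * ((hρ θ).1.cfc fun x => x ^ (1 - t)) * H).trace)) := by
  have hexp (t : ℝ) : exp (L t) = ρ t := by rw [hL, exp_cfc_log_of_posDef (hρ t)]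
  have hpow (t : ℝ) : exp (t • L θ) = (hρ θ).1.cfc fun x => x ^ t := by
    rw [hL, exp_smul_cfc_log_of_posDef (hρ θ)]
  have hLθ : HasDerivAt L H θ := hasDerivAt_matrix hH
  simpa only [hexp, hpow] using tendsto_trace_exp_relEntropy hLθ

end Matrix

/-- Relative entropy and quantum Fisher information in the Boltzmann–von Neumann model:
let `θ ↦ ρ_θ` be a family of positive definite density matrices whose matrix logarithm
`L(θ) = ln ρ_θ` (defined spectrally) is twice continuously differentiable (entrywise) with
derivative `H(θ) = L'(θ)`.  Then
`lim_{ε→0} ε^{−2} S_rel(ρ_{θ+ε} ‖ ρ_θ) = (1/2) ∫₀¹ Tr(ρ_θ^t H(θ) ρ_θ^{1−t} H(θ)) dt`,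
where `S_rel(ρ‖σ) = Tr(ρ(ln ρ − ln σ))` is the Kullback–Leibler quantum relative
entropy. -/
theorem relEntropy_qfi_bvn {n : ℕ}
    (ρ L H : ℝ → Matrix (Fin n) (Fin n) ℂ)
    (hρ : ∀ θ, (ρ θ).PosDef)
    (htrρ : ∀ θ, (ρ θ).trace = 1)
    (hL : ∀ θ, L θ = (hρ θ).1.cfc Real.log)
    (hLsmooth : ∀ i j : Fin n, ContDiff ℝ 2 (fun θ => L θ i j))
    (hH : ∀ (i j : Fin n) (θ : ℝ), HasDerivAt (fun t => L t i j) (H θ i j) θ) :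
    ∀ θ : ℝ,
      Tendsto
        (fun ε : ℝ => ((ε : ℂ) ^ 2)⁻¹ * ((ρ (θ + ε)) * (L (θ + ε) - L θ)).trace)
        (𝓝[≠] (0 : ℝ))
        (𝓝 ((1 / 2 : ℂ) *
          ∫ t in (0 : ℝ)..1,
            (mpow (hρ θ) t * H θ * mpow (hρ θ) (1 - t) * H θ).trace)) := by
  intro θ
  simpa [htrρ, mpow] using relEntropy_qfi_bvn_general ρ L (H θ) θ hρ hL fun i j => hH i j θ
end
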